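/- Let C = {(x, y, 0) ∈ ℝ³ : x² + y² = 1} be the unit circle in the xy-plane of ℝ³. Then for every ε with 0 ≤ ε ≤ 1, the Lebesgue volume of the solid torus {p ∈ ℝ³ : infDist(p, C) ≤ ε} equals 2π²ε². -/

import Mathlib

open MeasureTheory Metric

/-!
Let `(x, z)` be a point with `x` in the plane of a circle of radius `R` and `z` orthogonal to it.
Its squared distance to the circle is `(‖x‖ - R) ^ 2 + ‖z‖ ^ 2`, so for fixed `z` the tube of radius
`ε ≤ R` is cut in a plane annulus `|‖x‖ - R| ≤ w`, of area `π (R + w) ^ 2 - π (R - w) ^ 2`, that is,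
`2πR · 2w`. A ball of radius `ε` with one coordinate `t` in place of `x` is cut in the segment
`|t| ≤ w` of length `2w`. By Cavalieri's principle the volume of the tube is `2πR` times that of the
ball, whose dimension is one less.
-/

open Module
open scoped Real

lemma infDist_sphere {E : Type*} [NormedAddCommGroup E] [NormedSpace ℝ E] [Nontrivial E]
    (x c : E) {R : ℝ} (hR : 0 ≤ R) : infDist x (sphere c R) = |dist x c - R| := by
  have hne : (sphere c R).Nonempty := NormedSpace.sphere_nonempty.2 hR
  obtain ⟨y, hy, hxy⟩ : ∃ y ∈ sphere c R, dist x y = |dist x c - R| := by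
    rcases eq_or_ne x c with rfl | hxc
    · obtain ⟨y, hy⟩ := hne
      exact ⟨y, hy, by rw [dist_comm, hy, dist_self, zero_sub, abs_neg, abs_of_nonneg hR]⟩
    · have hd : ‖x - c‖ ≠ 0 := norm_ne_zero_iff.2 (sub_ne_zero.2 hxc)
      refine ⟨c + (R / ‖x - c‖) • (x - c), ?_, ?_⟩
      · rw [mem_sphere_iff_norm, add_sub_cancel_left, norm_smul, norm_div, norm_norm,
          div_mul_cancel₀ _ hd, Real.norm_of_nonneg hR]
      · have hsub : x - (c + (R / ‖x - c‖) • (x - c)) = (1 - R / ‖x - c‖) • (x - c) := by module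
        rw [dist_eq_norm, hsub, norm_smul, Real.norm_eq_abs, ← abs_norm (x - c), ← abs_mul,
          abs_norm, sub_mul, one_mul, div_mul_cancel₀ _ hd, dist_eq_norm]
  refine le_antisymm (hxy ▸ infDist_le_dist_of_mem hy) ((le_infDist hne).2 fun z hz ↦ ?_)
  rw [← mem_sphere.1 hz]
  exact abs_dist_sub_le x z c

lemma le_infDist_sq {X : Type*} [PseudoMetricSpace X] {s : Set X} (hs : s.Nonempty) {x : X}
    {a : ℝ} : a ≤ infDist x s ^ 2 ↔ ∀ y ∈ s, a ≤ dist x y ^ 2 := by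
  simp only [← Real.sqrt_le_left infDist_nonneg, ← Real.sqrt_le_left dist_nonneg, le_infDist hs]

lemma infDist_prod_sq_eq_of_L2 {X Y : Type*} [PseudoMetricSpace X] [PseudoMetricSpace Y]
    {s : Set X} {t : Set Y} (hs : s.Nonempty) (ht : t.Nonempty) (p : WithLp 2 (X × Y)) :
    infDist p (WithLp.ofLp ⁻¹' s ×ˢ t) ^ 2 = infDist p.fst s ^ 2 + infDist p.snd t ^ 2 := by
  have hdist (q : WithLp 2 (X × Y)) :
      dist p q ^ 2 = dist p.fst q.fst ^ 2 + dist p.snd q.snd ^ 2 := by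
    rw [WithLp.prod_dist_eq_add (by simp), ENNReal.toReal_ofNat, ← Real.sqrt_eq_rpow]
    simp only [Real.rpow_ofNat]
    exact Real.sq_sqrt (by positivity)
  have hst : (WithLp.ofLp ⁻¹' s ×ˢ t : Set (WithLp 2 (X × Y))).Nonempty :=
    (hs.prod ht).preimage (WithLp.ofLp_surjective 2)
  apply le_antisymm
  · rw [← sub_le_iff_le_add, le_infDist_sq hs]
    intro x hx
    rw [sub_le_comm, le_infDist_sq ht]
    intro y hy
    rw [sub_le_iff_le_add']
    refine le_trans ?_ (hdist (WithLp.toLp 2 (x, y))).le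
    exact (le_infDist_sq hst).1 le_rfl _ ⟨hx, hy⟩
  · refine (le_infDist_sq hst).2 fun q hq ↦ ?_
    rw [hdist]
    exact add_le_add ((le_infDist_sq hs).1 le_rfl _ hq.1) ((le_infDist_sq ht).1 le_rfl _ hq.2)

section Volume

variable {U V : Type*}
  [NormedAddCommGroup U] [InnerProductSpace ℝ U] [FiniteDimensional ℝ U]
  [MeasurableSpace U] [BorelSpace U]

lemma volume_closedBall_zero_of_finrank_eq {n : ℕ} (hU : finrank ℝ U = n) (r : ℝ) :
    volume (closedBall (0 : U) r) = volume (closedBall (0 : EuclideanSpace ℝ (Fin n)) r) := by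
  subst hU
  have h := (stdOrthonormalBasis ℝ U).measurePreserving_repr.measure_preimage
    (s := closedBall 0 r) measurableSet_closedBall.nullMeasurableSet
  rwa [LinearIsometryEquiv.preimage_closedBall, map_zero] at h

lemma volume_annulus (hU : finrank ℝ U = 2) {R w : ℝ} (hw : 0 ≤ w) (hwR : w ≤ R) :
    volume {x : U | |‖x‖ - R| ≤ w} =
      ENNReal.ofReal (2 * π * R) * volume (closedBall (0 : ℝ) w) := by
  have : Nontrivial U := nontrivial_of_finrank_pos (R := ℝ) (by lia)
  have hset : {x : U | |‖x‖ - R| ≤ w} = closedBall 0 (R + w) \ ball 0 (R - w) := by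
    ext x
    simp only [Set.mem_ofPred_eq, Set.mem_sdiff, mem_closedBall_zero_iff, mem_ball_zero_iff, not_lt,
      abs_le]
    constructor <;> rintro ⟨h, h'⟩ <;> constructor <;> linarith
  have hsub : ball (0 : U) (R - w) ⊆ closedBall 0 (R + w) :=
    ball_subset_closedBall.trans (closedBall_subset_closedBall (by linarith))
  rw [hset, measure_sdiff hsub measurableSet_ball.nullMeasurableSet measure_ball_lt_top.ne,
    InnerProductSpace.volume_closedBall_of_dim_even (k := 1) hU,
    InnerProductSpace.volume_ball_of_dim_even (k := 1) hU, hU, Real.volume_closedBall,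
    ← ENNReal.ofReal_pow (by linarith), ← ENNReal.ofReal_pow (by linarith),
    ← ENNReal.ofReal_mul (by positivity), ← ENNReal.ofReal_mul (by positivity),
    ← ENNReal.ofReal_sub _ (by positivity),
    ← ENNReal.ofReal_mul (mul_nonneg (by positivity) (hw.trans hwR))]
  congr 1
  simp only [pow_one, Nat.factorial_one, Nat.cast_one, div_one]
  ring

lemma volume_norm_sub_sq_le (hU : finrank ℝ U = 2) {R a : ℝ} (hR : 0 ≤ R) (ha : a ≤ R ^ 2) :
    volume {x : U | (‖x‖ - R) ^ 2 ≤ a} =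
      ENNReal.ofReal (2 * π * R) * volume {t : ℝ | t ^ 2 ≤ a} := by
  rcases lt_or_ge a 0 with ha0 | ha0
  · have hempty (s : ℝ) : ¬ s ^ 2 ≤ a := fun h ↦ (ha0.trans_le (sq_nonneg s)).not_ge h
    simp only [hempty, Set.ofPred_false, measure_empty, mul_zero]
  · have hsq (s : ℝ) : s ^ 2 ≤ a ↔ |s| ≤ √a := by
      rw [Real.le_sqrt (abs_nonneg s) ha0, sq_abs]
    have hball : closedBall (0 : ℝ) √a = {t | |t| ≤ √a} := by
      ext t
      exact mem_closedBall_zero_iff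
    simp only [hsq]
    rw [volume_annulus hU (Real.sqrt_nonneg a) ((Real.sqrt_le_left hR).2 ha), hball]

lemma measure_prod_norm_sub_sq_add_norm_sq_le [SeminormedAddCommGroup V] [MeasurableSpace V]
    [OpensMeasurableSpace V] (μ : Measure V) [SFinite μ] (hU : finrank ℝ U = 2) {R a : ℝ}
    (hR : 0 ≤ R) (ha : a ≤ R ^ 2) :
    volume.prod μ {p : U × V | (‖p.1‖ - R) ^ 2 + ‖p.2‖ ^ 2 ≤ a} =
      ENNReal.ofReal (2 * π * R) * volume.prod μ {p : ℝ × V | p.1 ^ 2 + ‖p.2‖ ^ 2 ≤ a} := by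
  have htorus : MeasurableSet {p : U × V | (‖p.1‖ - R) ^ 2 + ‖p.2‖ ^ 2 ≤ a} :=
    measurableSet_le (by fun_prop) measurable_const
  have hball : MeasurableSet {p : ℝ × V | p.1 ^ 2 + ‖p.2‖ ^ 2 ≤ a} :=
    measurableSet_le (by fun_prop) measurable_const
  rw [Measure.prod_apply_symm htorus, Measure.prod_apply_symm hball,
    ← lintegral_const_mul _ (measurable_measure_prodMk_right hball)]
  congr 1 with z
  have hslice := volume_norm_sub_sq_le hU hR (a := a - ‖z‖ ^ 2) (by linarith [sq_nonneg ‖z‖])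
  simpa only [Set.preimage_ofPred_eq, le_sub_iff_add_le] using hslice

variable [NormedAddCommGroup V] [InnerProductSpace ℝ V] [FiniteDimensional ℝ V]
  [MeasurableSpace V] [BorelSpace V]

lemma volume_tube_sphere_prod_zero (hU : finrank ℝ U = 2) {R ε : ℝ} (hε : 0 ≤ ε) (hεR : ε ≤ R) :
    volume {p : WithLp 2 (U × V) | infDist p (WithLp.ofLp ⁻¹' sphere 0 R ×ˢ {0}) ≤ ε} =
      ENNReal.ofReal (2 * π * R) * volume (closedBall (0 : WithLp 2 (ℝ × V)) ε) := by
  have hR : 0 ≤ R := hε.trans hεR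
  have : Nontrivial U := nontrivial_of_finrank_pos (R := ℝ) (by lia)
  have htube : WithLp.toLp 2 ⁻¹'
      {p : WithLp 2 (U × V) | infDist p (WithLp.ofLp ⁻¹' sphere 0 R ×ˢ {0}) ≤ ε} =
      {p : U × V | (‖p.1‖ - R) ^ 2 + ‖p.2‖ ^ 2 ≤ ε ^ 2} := by
    ext p
    rw [Set.mem_preimage, Set.mem_ofPred_eq, Set.mem_ofPred_eq, ← sq_le_sq₀ infDist_nonneg hε,
      infDist_prod_sq_eq_of_L2 (NormedSpace.sphere_nonempty.2 hR) (Set.singleton_nonempty 0),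
      infDist_sphere _ _ hR, infDist_singleton, sq_abs, dist_zero_right, dist_zero_right,
      WithLp.toLp_fst, WithLp.toLp_snd]
  have hball : WithLp.toLp 2 ⁻¹' closedBall (0 : WithLp 2 (ℝ × V)) ε =
      {p : ℝ × V | p.1 ^ 2 + ‖p.2‖ ^ 2 ≤ ε ^ 2} := by
    ext p
    rw [Set.mem_preimage, mem_closedBall_zero_iff, Set.mem_ofPred_eq,
      ← sq_le_sq₀ (norm_nonneg _) hε, WithLp.prod_norm_sq_eq_of_L2, Real.norm_eq_abs, sq_abs,
      WithLp.toLp_fst, WithLp.toLp_snd]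
  have hclosed : IsClosed
      {p : WithLp 2 (U × V) | infDist p (WithLp.ofLp ⁻¹' sphere 0 R ×ˢ {0}) ≤ ε} :=
    isClosed_le (continuous_infDist_pt _) continuous_const
  rw [← (WithLp.volume_preserving_toLp U V).measure_preimage
      hclosed.measurableSet.nullMeasurableSet,
    ← (WithLp.volume_preserving_toLp ℝ V).measure_preimage
      measurableSet_closedBall.nullMeasurableSet, htube, hball]
  exact measure_prod_norm_sub_sq_add_norm_sq_le volume hU hR (pow_le_pow_left₀ hε hεR 2)

end Volume

lemma preimage_orthogonalDecomposition_sphere_prod_zero {E : Type*} [NormedAddCommGroup E]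
    [InnerProductSpace ℝ E] (P : Submodule ℝ E) [P.HasOrthogonalProjection] (R : ℝ) :
    P.orthogonalDecomposition ⁻¹' (WithLp.ofLp ⁻¹' sphere 0 R ×ˢ {0}) =
      (P ∩ sphere 0 R : Set E) := by
  ext q
  have hmem : Pᗮ.orthogonalProjectionOnto q = 0 ↔ q ∈ P := by
    rw [Submodule.orthogonalProjectionOnto_eq_zero_iff, P.orthogonal_orthogonal]
  rw [Set.mem_preimage, P.orthogonalDecomposition_apply, Set.mem_preimage, Set.mem_prod,
    Set.mem_singleton_iff, hmem, and_comm, Set.mem_inter_iff, SetLike.mem_coe]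
  refine and_congr_right fun hq ↦ ?_
  rw [mem_sphere_zero_iff_norm, mem_sphere_zero_iff_norm, P.norm_orthogonalProjectionOnto_apply hq]

theorem tube_volume_circle_general {E : Type*} [NormedAddCommGroup E] [InnerProductSpace ℝ E]
    [FiniteDimensional ℝ E] [MeasurableSpace E] [BorelSpace E] {n : ℕ}
    (hE : finrank ℝ E = n + 1) {P : Submodule ℝ E} (hP : finrank ℝ P = 2) {R ε : ℝ}
    (hε : 0 ≤ ε) (hεR : ε ≤ R) :
    volume {p : E | infDist p (P ∩ sphere 0 R) ≤ ε} =
      ENNReal.ofReal (2 * π * R) * volume (closedBall (0 : EuclideanSpace ℝ (Fin n)) ε) := by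
  have hdim : finrank ℝ (WithLp 2 (ℝ × Pᗮ)) = n := by
    have := P.finrank_add_finrank_orthogonal
    rw [(WithLp.linearEquiv 2 ℝ (ℝ × Pᗮ)).finrank_eq, finrank_prod, finrank_self]
    lia
  have hinfDist (p : E) : infDist (P.orthogonalDecomposition p)
      (WithLp.ofLp ⁻¹' sphere 0 R ×ˢ {0}) = infDist p (P ∩ sphere 0 R) := by
    rw [← infDist_image P.orthogonalDecomposition.isometry,
      ← preimage_orthogonalDecomposition_sphere_prod_zero,
      Set.image_preimage_eq _ P.orthogonalDecomposition.surjective]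
  rw [← volume_closedBall_zero_of_finrank_eq hdim, ← volume_tube_sphere_prod_zero hP hε hεR,
    ← P.orthogonalDecomposition.measurePreserving.measure_preimage
      (isClosed_le (continuous_infDist_pt _) continuous_const).measurableSet.nullMeasurableSet]
  simp only [Set.preimage_ofPred_eq, hinfDist]

lemma finrank_orthogonal_single_two :
    finrank ℝ (ℝ ∙ EuclideanSpace.single (2 : Fin 3) (1 : ℝ))ᗮ = 2 := by
  have : Fact (finrank ℝ (EuclideanSpace ℝ (Fin 3)) = 2 + 1) := ⟨finrank_euclideanSpace_fin⟩
  exact Submodule.finrank_orthogonal_span_singleton (by simp)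

lemma horizontal_unitCircle_eq_orthogonal_inter_sphere :
    {q : EuclideanSpace ℝ (Fin 3) | q 0 ^ 2 + q 1 ^ 2 = 1 ∧ q 2 = 0} =
      ↑(ℝ ∙ EuclideanSpace.single (2 : Fin 3) (1 : ℝ))ᗮ ∩ sphere 0 1 := by
  ext q
  have hplane : q ∈ (ℝ ∙ EuclideanSpace.single (2 : Fin 3) (1 : ℝ))ᗮ ↔ q 2 = 0 := by
    rw [Submodule.mem_orthogonal_singleton_iff_inner_right, EuclideanSpace.inner_single_left,
      map_one, one_mul]
  rw [Set.mem_ofPred_eq, and_comm, Set.mem_inter_iff, SetLike.mem_coe, hplane]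
  refine and_congr_right fun hq ↦ ?_
  rw [mem_sphere_zero_iff_norm, ← sq_eq_sq₀ (norm_nonneg q) zero_le_one, one_pow,
    EuclideanSpace.real_norm_sq_eq, Fin.sum_univ_three, hq, zero_pow two_ne_zero, add_zero]

/-- The volume of the solid torus of radius `0 ≤ ε ≤ 1` around the unit circle
`C = {(x, y, 0) : x² + y² = 1}` in `ℝ³` equals `2π²ε²`. -/
theorem tube_volume_circle
    (ε : ℝ) (hε0 : 0 ≤ ε) (hε1 : ε ≤ 1) :
    volume {p : EuclideanSpace ℝ (Fin 3) |
        infDist p {q : EuclideanSpace ℝ (Fin 3) | q 0 ^ 2 + q 1 ^ 2 = 1 ∧ q 2 = 0} ≤ ε} =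
      ENNReal.ofReal (2 * Real.pi ^ 2 * ε ^ 2) := by
  rw [horizontal_unitCircle_eq_orthogonal_inter_sphere,
    tube_volume_circle_general finrank_euclideanSpace_fin finrank_orthogonal_single_two hε0 hε1,
    EuclideanSpace.volume_closedBall_fin_two, ← ENNReal.ofReal_pow hε0,
    ← ENNReal.ofReal_mul (by positivity), ← ENNReal.ofReal_mul (by positivity)]
  ring_nf
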